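/- arXiv:1612.09097 — 8 statements merged into one kernel-verified Lean document; each statement's English description precedes it below -/
import Mathlib

section
/- Let V be a real inner product space with inner product ⟨·,·⟩, and let a : V × V → ℝ be a symmetric bilinear form. Suppose u, uʰ ∈ V and λ, λʰ ∈ ℝ satisfy: a(w, u) = λ⟨w, u⟩ for all w ∈ V; ⟨u, u⟩ = 1; ⟨uʰ, uʰ⟩ = 1; and a(uʰ, uʰ) = λʰ. Then the Pythagorean eigenvalue identity holds: a(u − uʰ, u − uʰ) = λ·⟨u − uʰ, u − uʰ⟩ + λʰ − λ. -/
open RealInnerProductSpace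

/-- **Pythagorean eigenvalue theorem** (Strang–Fix) for a consistent Galerkin
discretization: if `(lam, u)` is an exact eigenpair of the symmetric bilinear
form `a` relative to the inner product, normalized in the `L²`-type norm, and
`(lamh, uh)` is a discrete eigenpair also normalized, then the squared
energy-norm error equals the scaled squared `L²`-error plus the eigenvalue error. -/
theorem pythagorean_eigenvalue_theorem
    {V : Type*} [NormedAddCommGroup V] [InnerProductSpace ℝ V]
    (a : LinearMap.BilinForm ℝ V) (hsym : ∀ x y : V, a x y = a y x)
    (u uh : V) (lam lamh : ℝ)
    (heig : ∀ w : V, a w u = lam * ⟪w, u⟫)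
    (hnorm : ⟪u, u⟫ = 1)
    (hnormh : ⟪uh, uh⟫ = 1)
    (hdisc : a uh uh = lamh) :
    a (u - uh) (u - uh) = lam * ⟪u - uh, u - uh⟫ + lamh - lam := by
  have h1 := heig u
  have h2 := heig uh
  have h3 := hsym u uh
  have h4 := real_inner_comm u uh
  rw [hnorm] at h1
  simp only [map_sub, LinearMap.sub_apply, inner_sub_left, inner_sub_right]
  rw [h3, h1, h2, hdisc, hnorm, hnormh, ← h4]
  ring
end

section
/- Let V be a real inner product space with inner product ⟨·,·⟩, and let a, a_h, b_h : V × V → ℝ be symmetric bilinear forms. Suppose u, v ∈ V and λ, μ ∈ ℝ satisfy: a(w, u) = λ⟨w, u⟩ for all w ∈ V; ⟨u, u⟩ = 1; b_h(v, v) = 1; and a_h(v, v) = μ·b_h(v, v). Then the generalized Pythagorean eigenvalue identity holds: a(u − v, u − v) = μ − λ + λ·⟨u − v, u − v⟩ + (a(v, v) − a_h(v, v)) + λ·(b_h(v, v) − ⟨v, v⟩). -/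
open RealInnerProductSpace

/-- **Generalized Pythagorean eigenvalue theorem** for weak forms with modified
(inexactly integrated) inner products: `a` is the exact energy inner product,
`⟪·,·⟫` the exact `L²`-type inner product, `ah` and `bh` the modified energy and
`L²` inner products, `(lam, u)` an exact eigenpair with `⟪u,u⟫ = 1`, and
`(mu, v)` a discrete eigenpair of the modified problem with `bh v v = 1`. -/
theorem generalized_pythagorean_eigenvalue_theorem
    {V : Type*} [NormedAddCommGroup V] [InnerProductSpace ℝ V]
    (a ah bh : LinearMap.BilinForm ℝ V)
    (hasym : ∀ x y : V, a x y = a y x)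
    (hahsym : ∀ x y : V, ah x y = ah y x)
    (hbhsym : ∀ x y : V, bh x y = bh y x)
    (u v : V) (lam mu : ℝ)
    (heig : ∀ w : V, a w u = lam * ⟪w, u⟫)
    (hnorm : ⟪u, u⟫ = 1)
    (hnormh : bh v v = 1)
    (hdisc : ah v v = mu * bh v v) :
    a (u - v) (u - v)
      = mu - lam + lam * ⟪u - v, u - v⟫ + (a v v - ah v v)
        + lam * (bh v v - ⟪v, v⟫) := by
  have h1 : a u v = lam * ⟪v, u⟫ := by rw [hasym, heig]
  have h2 : (⟪u, v⟫ : ℝ) = ⟪v, u⟫ := real_inner_comm _ _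
  have h3 : a (u - v) (u - v) = a u u - a u v - a v u + a v v := by
    simp only [map_sub, LinearMap.sub_apply]
    ring
  have h4 : (⟪u - v, u - v⟫ : ℝ) = ⟪u, u⟫ - ⟪u, v⟫ - ⟪v, u⟫ + ⟪v, v⟫ := by
    simp only [inner_sub_left, inner_sub_right]
    ring
  rw [h3, h4, h1, heig u, heig v, hdisc, hnormh, hnorm, h2]
  ring
end

section
/- Let V be a real inner product space with inner product ⟨·,·⟩, and let a, a_h, b_h : V × V → ℝ be symmetric bilinear forms. Suppose u, v ∈ V and λ, μ ∈ ℝ with λ > 0 satisfy: a(w, u) = λ⟨w, u⟩ for all w ∈ V; ⟨u, u⟩ = 1; b_h(v, v) = 1; and a_h(v, v) = μ. Then a(u − v, u − v)/λ = (μ − λ)/λ + ⟨u − v, u − v⟩ + (a(v, v) − a_h(v, v))/λ + (1 − ⟨v, v⟩). -/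
open RealInnerProductSpace

/-- Relative (normalized) form of the **generalized Pythagorean eigenvalue
theorem** for weak forms with modified inner products: the relative squared
energy-norm error splits into the relative eigenvalue error, the squared
`L²`-norm eigenfunction error, the relative discrete energy-norm error, and
the `L²` inner product error. -/
theorem generalized_pythagorean_eigenvalue_theorem_relative
    {V : Type*} [NormedAddCommGroup V] [InnerProductSpace ℝ V]
    (a ah bh : LinearMap.BilinForm ℝ V)
    (hasym : ∀ x y : V, a x y = a y x)
    (hahsym : ∀ x y : V, ah x y = ah y x)
    (hbhsym : ∀ x y : V, bh x y = bh y x)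
    (u v : V) (lam mu : ℝ) (hlam : 0 < lam)
    (heig : ∀ w : V, a w u = lam * ⟪w, u⟫)
    (hnorm : ⟪u, u⟫ = 1)
    (hnormh : bh v v = 1)
    (hdisc : ah v v = mu) :
    a (u - v) (u - v) / lam
      = (mu - lam) / lam + ⟪u - v, u - v⟫ + (a v v - ah v v) / lam
        + (1 - ⟪v, v⟫) := by
  have h1 : a (u - v) (u - v) = lam - 2 * (lam * ⟪v, u⟫) + a v v := by
    simp only [map_sub, LinearMap.sub_apply]
    rw [hasym u v, heig u, heig v, hnorm]
    ring
  have h2 : ⟪u - v, u - v⟫ = 1 - 2 * ⟪v, u⟫ + ⟪v, v⟫ := by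
    rw [inner_sub_left, inner_sub_right, inner_sub_right, hnorm, real_inner_comm v u]
    ring
  rw [h1, h2, hdisc]
  have hne : lam ≠ 0 := hlam.ne'
  field_simp
  ring
end

section
/- Fix τ ∈ ℝ and define F_τ : ℝ → ℝ by F_τ(θ) = √(6(1 − cos θ)/(2 + τ + (1 − τ)·cos θ)). Then, as θ → 0, F_τ(θ) = θ + (1 − 2τ)·θ³/24 + O(θ⁵); that is, the function θ ↦ F_τ(θ) − θ − (1 − 2τ)θ³/24 is O(θ⁵) in a neighborhood of 0. -/
open Real Filter Asymptotics Topology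

theorem cos_six_bound (x : ℝ) (hx : |x| ≤ 1) :
    |Real.cos x - (1 - x ^ 2 / 2 + x ^ 4 / 24)| ≤ |x ^ 6| := by
  have h := Complex.exp_bound (x := (x : ℂ) * Complex.I) (by simpa using hx) (n := 6) (by norm_num)
  have h2 := (Complex.abs_re_le_norm _).trans h
  have e : (Complex.exp ((x : ℂ) * Complex.I)
      - ∑ m ∈ Finset.range 6, ((x : ℂ) * Complex.I) ^ m / (m.factorial : ℂ)).re
      = Real.cos x - (1 - x ^ 2 / 2 + x ^ 4 / 24) := by
    have e1 : ∑ m ∈ Finset.range 6, ((x : ℂ) * Complex.I) ^ m / (m.factorial : ℂ)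
        = ((1 - x ^ 2 / 2 + x ^ 4 / 24 : ℝ) : ℂ)
          + ((x - x ^ 3 / 6 + x ^ 5 / 120 : ℝ) : ℂ) * Complex.I := by
      have i3 : Complex.I ^ 3 = -Complex.I := Complex.I_pow_three
      have i4 : Complex.I ^ 4 = 1 := Complex.I_pow_four
      have i5 : Complex.I ^ 5 = Complex.I := by rw [pow_succ, i4, one_mul]
      simp only [Finset.sum_range_succ, Finset.sum_range_zero, mul_pow, i3, i4, i5,
        Complex.I_sq, Nat.factorial]
      push_cast
      ring
    rw [e1, Complex.sub_re, Complex.exp_ofReal_mul_I_re, Complex.add_re, Complex.re_ofReal_mul,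
      Complex.ofReal_re]
    simp
  rw [e] at h2
  refine h2.trans ?_
  have e3 : ‖(x : ℂ) * Complex.I‖ = |x| := by simp
  rw [e3, abs_pow]
  have : 0 ≤ |x| ^ 6 := by positivity
  norm_num [Nat.factorial]
  nlinarith

theorem num_bigO (τ : ℝ) :
    (fun θ : ℝ => 6 * (1 - Real.cos θ) - (θ + (1 - 2 * τ) * θ ^ 3 / 24) ^ 2
      * (2 + τ + (1 - τ) * Real.cos θ)) =O[𝓝 (0 : ℝ)] fun θ : ℝ => θ ^ 6 := by
  have hr : (fun θ : ℝ => Real.cos θ - (1 - θ ^ 2 / 2 + θ ^ 4 / 24))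
      =O[𝓝 (0 : ℝ)] fun θ : ℝ => θ ^ 6 := by
    refine IsBigO.of_bound 1 ?_
    filter_upwards [Metric.closedBall_mem_nhds (0 : ℝ) one_pos] with θ hθ
    simp only [Real.norm_eq_abs, one_mul]
    exact cos_six_bound θ (by simpa using hθ)
  have bd : ∀ f : ℝ → ℝ, Continuous f → f =O[𝓝 (0 : ℝ)] fun _ : ℝ => (1 : ℝ) :=
    fun f hf => hf.continuousAt.isBigO_one ℝ
  have h1 := hr.mul (bd (fun θ => -6 - (1 - τ) * (θ + (1 - 2 * τ) * θ ^ 3 / 24) ^ 2)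
    (by fun_prop))
  have h2 := (isBigO_refl (fun θ : ℝ => θ ^ 6) (𝓝 0)).mul
    (bd (fun θ => -3 * ((1 - 2 * τ) / 24) ^ 2
      + (1 - τ) * (2 * ((1 - 2 * τ) / 24) + ((1 - 2 * τ) / 24) ^ 2 * θ ^ 2) * (1 / 2 - θ ^ 2 / 24)
      - (1 - τ) / 24) (by fun_prop))
  have h := h1.add h2
  simp only [mul_one] at h
  refine h.congr_left fun θ => ?_
  ring

/-- Dispersion expansion for the blended linear scheme with blending parameter
`τ` (mass matrix `M_τ = τ·M_SE + (1 − τ)·M_FE`): the discrete frequency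
function `F_τ(θ) = √(6(1 − cos θ)/(2 + τ + (1 − τ)cos θ))` satisfies
`F_τ(θ) = θ + (1 − 2τ)θ³/24 + O(θ⁵)` as `θ → 0`; for `τ = 0` and `τ = 1` this
reduces to the finite element and spectral element expansions, respectively. -/
theorem blended_linear_dispersion_expansion (τ : ℝ) :
    (fun θ : ℝ =>
        Real.sqrt (6 * (1 - Real.cos θ) / (2 + τ + (1 - τ) * Real.cos θ))
          - θ - (1 - 2 * τ) * θ ^ 3 / 24)
      =O[𝓝[>] (0 : ℝ)] fun θ : ℝ => θ ^ 5 := by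
  obtain ⟨C, hC⟩ := (num_bigO τ).bound
  have hD : ∀ᶠ θ : ℝ in 𝓝 0, 1 < 2 + τ + (1 - τ) * Real.cos θ := by
    have hc : Continuous fun θ : ℝ => 2 + τ + (1 - τ) * Real.cos θ := by fun_prop
    refine hc.continuousAt.eventually (lt_mem_nhds ?_)
    simp only [Real.cos_zero]; linarith
  have hP : ∀ᶠ θ : ℝ in 𝓝 0, 1 / 2 < 1 + (1 - 2 * τ) * θ ^ 2 / 24 := by
    have hc : Continuous fun θ : ℝ => 1 + (1 - 2 * τ) * θ ^ 2 / 24 := by fun_prop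
    refine hc.continuousAt.eventually (lt_mem_nhds ?_)
    norm_num
  refine IsBigO.of_bound (2 * C) ?_
  filter_upwards [nhdsWithin_le_nhds hC, nhdsWithin_le_nhds hD, nhdsWithin_le_nhds hP,
    self_mem_nhdsWithin] with θ hC hD hP hθ
  have hθ : 0 < θ := hθ
  set D := 2 + τ + (1 - τ) * Real.cos θ with hDdef
  set p := θ + (1 - 2 * τ) * θ ^ 3 / 24 with hp
  have hpl : θ / 2 ≤ p := by
    have : p = θ * (1 + (1 - 2 * τ) * θ ^ 2 / 24) := by rw [hp]; ring
    rw [this]; nlinarith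
  set s := Real.sqrt (6 * (1 - Real.cos θ) / D) with hs
  have hs0 : 0 ≤ s := Real.sqrt_nonneg _
  have hss : s ^ 2 * D = 6 * (1 - Real.cos θ) := by
    rw [hs, Real.sq_sqrt (div_nonneg (by linarith [Real.cos_le_one θ]) (by linarith))]
    field_simp
  have key : 6 * (1 - Real.cos θ) - p ^ 2 * D = (s - p) * ((s + p) * D) := by
    rw [← hss]; ring
  rw [key] at hC
  simp only [Real.norm_eq_abs] at hC ⊢
  have e : s - θ - (1 - 2 * τ) * θ ^ 3 / 24 = s - p := by rw [hp]; ring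
  rw [e, abs_of_pos (by positivity : 0 < θ ^ 5)]
  rw [abs_mul, abs_of_pos (by positivity : 0 < θ ^ 6)] at hC
  have hq : θ / 2 ≤ |(s + p) * D| := by
    refine le_trans ?_ (le_abs_self _)
    nlinarith
  have h3 : |s - p| * (θ / 2) ≤ C * θ ^ 6 :=
    (mul_le_mul_of_nonneg_left hq (abs_nonneg _)).trans hC
  have h4 : |s - p| * (θ / 2) ≤ (2 * C * θ ^ 5) * (θ / 2) := by
    refine h3.trans (le_of_eq ?_); ring
  exact le_of_mul_le_mul_right h4 (by positivity)
end

section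
/- Define F : ℝ → ℝ by F(θ) = √(6(1 − cos θ)/(5/2 + (1/2)·cos θ)). Then, as θ → 0, F(θ) − θ = O(θ⁵); that is, the leading cubic phase-error term cancels and the blended scheme is two orders more accurate than its constituents. -/
open Real Filter Asymptotics Topology

theorem cos_bound_six (x : ℝ) (hx : |x| ≤ 1) :
    |Real.cos x - (1 - x ^ 2 / 2 + x ^ 4 / 24)| ≤ x ^ 6 := by
  have h := Complex.exp_bound (x := (x : ℂ) * Complex.I) (by simpa using hx) (n := 6) (by norm_num)
  have h2 := (Complex.abs_re_le_norm _).trans h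
  have e : (Complex.exp ((x : ℂ) * Complex.I) -
      ∑ m ∈ Finset.range 6, ((x : ℂ) * Complex.I) ^ m / (m.factorial : ℂ)).re =
      Real.cos x - (1 - x ^ 2 / 2 + x ^ 4 / 24) := by
    have e1 : ∑ m ∈ Finset.range 6, ((x : ℂ) * Complex.I) ^ m / (m.factorial : ℂ) =
        ((1 - x ^ 2 / 2 + x ^ 4 / 24 : ℝ) : ℂ) + ((x - x ^ 3 / 6 + x ^ 5 / 120 : ℝ) : ℂ) * Complex.I := by
      have h3 : Complex.I ^ 3 = - Complex.I := Complex.I_pow_three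
      have h4 : Complex.I ^ 4 = 1 := Complex.I_pow_four
      have h5 : Complex.I ^ 5 = Complex.I := by rw [pow_succ, h4, one_mul]
      simp only [Finset.sum_range_succ, Finset.sum_range_zero, mul_pow, h3, h4, h5, Complex.I_sq,
        Nat.factorial]
      push_cast
      ring
    rw [e1, Complex.sub_re, Complex.exp_ofReal_mul_I_re, Complex.add_re, Complex.re_ofReal_mul,
      Complex.ofReal_re]
    simp
  rw [e] at h2
  refine h2.trans ?_
  have e6 : ‖(x : ℂ) * Complex.I‖ ^ 6 = x ^ 6 := by
    simp only [norm_mul, Complex.norm_I, mul_one, Complex.norm_real, Real.norm_eq_abs]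
    exact Even.pow_abs (by decide) x
  rw [e6]
  have : 0 ≤ x ^ 6 := by positivity
  norm_num [Nat.factorial]
  linarith

/-- Superconvergence of the optimally-blended (`τ = 1/2`) linear
spectral–finite element scheme of Ainsworth and Wajid: the discrete frequency
function `F(θ) = √(6(1 − cos θ)/(5/2 + cos θ/2))` satisfies
`F(θ) − θ = O(θ⁵)` as `θ → 0`; the leading cubic phase-error term cancels and
the blended scheme is two orders more accurate than its constituents. -/
theorem optimally_blended_linear_dispersion_superconvergence :
    (fun θ : ℝ =>
        Real.sqrt (6 * (1 - Real.cos θ) / (5 / 2 + (1 / 2) * Real.cos θ)) - θ)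
      =O[𝓝[>] (0 : ℝ)] fun θ : ℝ => θ ^ 5 := by
  apply IsBigO.of_bound 10
  filter_upwards [Ioo_mem_nhdsGT (zero_lt_one' ℝ)] with t ht
  obtain ⟨h0, h1⟩ := ht
  have hb := cos_bound_six t (by rw [abs_of_pos h0]; exact h1.le)
  have hc := Real.neg_one_le_cos t
  have hc1 := Real.cos_le_one t
  have hd : 0 < 5 / 2 + 1 / 2 * Real.cos t := by linarith
  set D := 5 / 2 + 1 / 2 * Real.cos t with hD
  have hnn : 0 ≤ 6 * (1 - Real.cos t) / D := div_nonneg (by linarith) hd.le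
  have hs := Real.sq_sqrt hnn
  have hs0 := Real.sqrt_nonneg (6 * (1 - Real.cos t) / D)
  set s := Real.sqrt (6 * (1 - Real.cos t) / D)
  have hsD : s ^ 2 * D = 6 * (1 - Real.cos t) := by rw [hs]; field_simp
  have hD2 : 2 ≤ D := by linarith
  have key : |(s ^ 2 - t ^ 2) * D| ≤ 10 * t ^ 6 := by
    have h6 : 0 ≤ t ^ 6 := by positivity
    have ht2 : t ^ 2 ≤ 1 := by nlinarith
    obtain ⟨r, hr⟩ : ∃ r, r = Real.cos t - (1 - t ^ 2 / 2 + t ^ 4 / 24) := ⟨_, rfl⟩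
    rw [← hr] at hb
    have e : (s ^ 2 - t ^ 2) * D = -(6 + t ^ 2 / 2) * r - t ^ 6 / 48 := by
      rw [sub_mul, hsD, hD, show Real.cos t = r + (1 - t ^ 2 / 2 + t ^ 4 / 24) by linarith]
      ring
    rw [e]
    obtain ⟨b1, b2⟩ := abs_le.mp hb
    have t2 := sq_nonneg t
    rw [abs_le]
    constructor <;> nlinarith
  rw [Real.norm_eq_abs, Real.norm_eq_abs, abs_of_pos (by positivity : 0 < t ^ 5)]
  have e : |(s ^ 2 - t ^ 2) * D| = |s - t| * ((s + t) * D) := by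
    rw [show (s ^ 2 - t ^ 2) * D = (s - t) * ((s + t) * D) by ring, abs_mul,
      abs_of_nonneg (by positivity : 0 ≤ (s + t) * D)]
  rw [e] at key
  have hle : t ≤ (s + t) * D := by nlinarith
  have h3 : |s - t| * t ≤ |s - t| * ((s + t) * D) :=
    mul_le_mul_of_nonneg_left hle (abs_nonneg _)
  refine le_of_mul_le_mul_right (?_ : |s - t| * t ≤ 10 * t ^ 5 * t) h0
  linarith [show 10 * t ^ 5 * t = 10 * t ^ 6 by ring]
end

section
/- Define G_G : ℝ → ℝ by G_G(θ) = √(20(3 − 2cos θ − cos 2θ)/(33 + 26cos θ + cos 2θ)). Then, as θ → 0, G_G(θ) = θ + θ⁵/1440 + O(θ⁷); that is, the function θ ↦ G_G(θ) − θ − θ⁵/1440 is O(θ⁷) in a neighborhood of 0, so the absolute phase error of fully Gauss-integrated C¹ quadratic isogeometric analysis is (1/5!)·θ⁵/12 + O(θ⁷) in magnitude. -/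
open Real Filter Asymptotics Topology

lemma cos_bound_eight (x : ℝ) (hx : |x| ≤ 1) :
    |Real.cos x - (1 - x ^ 2 / 2 + x ^ 4 / 24 - x ^ 6 / 720)| ≤ |x| ^ 8 := by
  have h := Complex.exp_bound (x := (x : ℂ) * Complex.I) (by simpa using hx)
    (n := 8) (by norm_num)
  have h2 := (Complex.abs_re_le_norm _).trans h
  have e2 : Complex.I ^ 2 = -1 := Complex.I_sq
  have e3 : Complex.I ^ 3 = -Complex.I := Complex.I_pow_three
  have e4 : Complex.I ^ 4 = 1 := Complex.I_pow_four
  have e5 : Complex.I ^ 5 = Complex.I := by rw [pow_succ, e4, one_mul]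
  have e6 : Complex.I ^ 6 = -1 := by rw [pow_succ, e5, Complex.I_mul_I]
  have e7 : Complex.I ^ 7 = -Complex.I := by rw [pow_succ, e6]; ring
  have e : (∑ m ∈ Finset.range 8, ((x : ℂ) * Complex.I) ^ m / (m.factorial : ℂ))
      = ((1 - x ^ 2 / 2 + x ^ 4 / 24 - x ^ 6 / 720 : ℝ) : ℂ)
        + ((x - x ^ 3 / 6 + x ^ 5 / 120 - x ^ 7 / 5040 : ℝ) : ℂ) * Complex.I := by
    simp only [Finset.sum_range_succ, Finset.sum_range_zero, mul_pow, e2, e3, e4, e5, e6, e7,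
      Nat.factorial]
    push_cast
    ring
  rw [e, Complex.sub_re, Complex.exp_ofReal_mul_I_re, Complex.add_re, Complex.re_ofReal_mul,
    Complex.I_re, Complex.ofReal_re, mul_zero, add_zero] at h2
  refine h2.trans ?_
  have hn : ‖(x : ℂ) * Complex.I‖ = |x| := by simp
  rw [hn]
  have : (0 : ℝ) ≤ |x| ^ 8 := by positivity
  norm_num [Nat.factorial]
  linarith

/-- Dispersion expansion for fully Gauss-integrated `C¹` quadratic isogeometric
analysis: the discrete frequency function
`G_G(θ) = √(20(3 − 2cos θ − cos 2θ)/(33 + 26cos θ + cos 2θ))` satisfies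
`G_G(θ) = θ + θ⁵/1440 + O(θ⁷)` as `θ → 0`, i.e. its absolute phase error is
`(1/5!)·θ⁵/12 + O(θ⁷)`. -/
theorem iga_quadratic_gauss_dispersion_expansion :
    (fun θ : ℝ =>
        Real.sqrt (20 * (3 - 2 * Real.cos θ - Real.cos (2 * θ))
            / (33 + 26 * Real.cos θ + Real.cos (2 * θ)))
          - θ - θ ^ 5 / 1440)
      =O[𝓝[>] (0 : ℝ)] fun θ : ℝ => θ ^ 7 := by
  obtain ⟨Q, hQc, hQ⟩ : ∃ Q : ℝ → ℝ, Continuous Q ∧ ∀ t : ℝ,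
      20 * (3 - 2 * (1 - t ^ 2 / 2 + t ^ 4 / 24 - t ^ 6 / 720)
        - (1 - (2 * t) ^ 2 / 2 + (2 * t) ^ 4 / 24 - (2 * t) ^ 6 / 720))
      - (t + t ^ 5 / 1440) ^ 2 * (33 + 26 * (1 - t ^ 2 / 2 + t ^ 4 / 24 - t ^ 6 / 720)
        + (1 - (2 * t) ^ 2 / 2 + (2 * t) ^ 4 / 24 - (2 * t) ^ 6 / 720)) = t ^ 8 * Q t := by
    refine ⟨fun t => 7 / 48 + t ^ 2 * (-17 / 6912) + t ^ 4 * (5 / 27648) + t ^ 6 * (-7 / 8294400)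
      + t ^ 8 * (1 / 16588800), by fun_prop, fun t => by ring⟩
  obtain ⟨M, hM⟩ := isCompact_Icc.exists_bound_of_continuousOn (s := Set.Icc (0 : ℝ) (1 / 2))
    hQc.continuousOn
  refine IsBigO.of_bound (M + 40 + 20 * 256 + 26 + 256) ?_
  filter_upwards [Ioo_mem_nhdsGT (show (0 : ℝ) < 1 / 2 by norm_num)] with t ht
  obtain ⟨h0, h1⟩ := ht
  have hMt := hM t ⟨h0.le, h1.le⟩
  rw [Real.norm_eq_abs] at hMt
  have hr := cos_bound_eight t (by rw [abs_of_pos h0]; linarith)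
  have hs := cos_bound_eight (2 * t) (by rw [abs_of_pos (by linarith)]; linarith)
  rw [abs_of_pos h0] at hr
  rw [abs_of_pos (show 0 < 2 * t by linarith)] at hs
  have hq := hQ t
  have hc : 1 / 2 ≤ Real.cos t := by
    have := Real.one_sub_sq_div_two_le_cos (x := t); nlinarith
  have hD : 1 ≤ 33 + 26 * Real.cos t + Real.cos (2 * t) := by
    have := Real.neg_one_le_cos (2 * t); linarith
  have hN : 0 ≤ 20 * (3 - 2 * Real.cos t - Real.cos (2 * t)) := by
    have := Real.cos_le_one (2 * t); have := Real.cos_le_one t; linarith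
  generalize Real.cos t = c at *
  generalize Real.cos (2 * t) = d at *
  generalize hP1 : 1 - t ^ 2 / 2 + t ^ 4 / 24 - t ^ 6 / 720 = P1 at *
  generalize hP2 : 1 - (2 * t) ^ 2 / 2 + (2 * t) ^ 4 / 24 - (2 * t) ^ 6 / 720 = P2 at *
  have ht5 : 0 < t ^ 5 := by positivity
  have ht5' : t ^ 5 ≤ 1 := pow_le_one₀ h0.le (by linarith)
  have hp : t ≤ t + t ^ 5 / 1440 := by linarith
  have hp1 : t + t ^ 5 / 1440 ≤ 1 := by linarith
  rw [sub_sub]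
  generalize t + t ^ 5 / 1440 = p at *
  have hp2 : p ^ 2 ≤ 1 := pow_le_one₀ (by linarith) hp1
  have ht8 : 0 < t ^ 8 := by positivity
  set D := 33 + 26 * c + d with hDd
  set N := 20 * (3 - 2 * c - d) with hNd
  -- the main bound
  have hmain : |N - p ^ 2 * D| ≤ (M + 40 + 20 * 256 + 26 + 256) * t ^ 8 := by
    have hid : N - p ^ 2 * D = t ^ 8 * Q t + (-40 * (c - P1) + (-20 * (d - P2))
        + (-(p ^ 2 * (26 * (c - P1) + (d - P2))))) := by
      rw [← hq, hDd, hNd]; ring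
    have hs' : |d - P2| ≤ 256 * t ^ 8 := hs.trans (by rw [mul_pow]; norm_num)
    have a1 : |t ^ 8 * Q t| ≤ M * t ^ 8 := by
      rw [abs_mul, abs_of_pos ht8, mul_comm]; gcongr
    have a2 : |26 * (c - P1) + (d - P2)| ≤ (26 + 256) * t ^ 8 := by
      rw [abs_le] at *
      constructor <;> linarith [hr.1, hr.2, hs'.1, hs'.2]
    have a3 : |p ^ 2 * (26 * (c - P1) + (d - P2))| ≤ (26 + 256) * t ^ 8 := by
      rw [abs_mul, abs_of_nonneg (sq_nonneg p)]
      exact (mul_le_of_le_one_left (abs_nonneg _) hp2).trans a2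
    rw [hid]
    obtain ⟨b1, b2⟩ := abs_le.1 a1
    obtain ⟨b3, b4⟩ := abs_le.1 a3
    obtain ⟨b5, b6⟩ := abs_le.1 hr
    obtain ⟨b7, b8⟩ := abs_le.1 hs'
    rw [abs_le]
    constructor <;> linarith
  have hDpos : 0 < D := by linarith
  have hf : |N / D - p ^ 2| ≤ (M + 40 + 20 * 256 + 26 + 256) * t ^ 8 := by
    have : N / D - p ^ 2 = (N - p ^ 2 * D) / D := by field_simp
    rw [this, abs_div, abs_of_pos hDpos]
    exact (div_le_self (abs_nonneg _) hD).trans hmain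
  have hsq : Real.sqrt (N / D) ^ 2 = N / D := Real.sq_sqrt (div_nonneg hN hDpos.le)
  have hs0 := Real.sqrt_nonneg (N / D)
  rw [Real.norm_eq_abs, Real.norm_eq_abs, abs_of_pos (by positivity : 0 < t ^ 7)]
  rw [← hsq, sq_sub_sq, abs_mul, abs_of_pos (by linarith : 0 < Real.sqrt (N / D) + p)] at hf
  refine le_of_mul_le_mul_left ?_ h0
  calc t * |Real.sqrt (N / D) - p| ≤ (Real.sqrt (N / D) + p) * |Real.sqrt (N / D) - p| := by
        gcongr; linarith
    _ ≤ _ := hf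
    _ = _ := by ring
end

section
/- Define G_L : ℝ → ℝ by G_L(θ) = √(16(3 − 2cos θ − cos 2θ)/(27 + 20cos θ + cos 2θ)). Then, as θ → 0, G_L(θ) = θ − θ⁵/2880 + O(θ⁷); that is, the function θ ↦ G_L(θ) − θ + θ⁵/2880 is O(θ⁷) in a neighborhood of 0, so the absolute phase error of Lobatto-integrated C¹ quadratic isogeometric analysis is (1/5!)·θ⁵/24 + O(θ⁷) in magnitude and of opposite sign to that of the Gauss-integrated scheme. -/
open Real Filter Asymptotics Topology

lemma cos_taylor_aux (x : ℝ) (hx0 : 0 < x) (hx1 : x ≤ 1) :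
    ∃ t : ℝ, |t| ≤ 1 ∧ Real.cos x = 1 - (x^2/2 - x^4/24 + x^6/720 - x^8*t) := by
  have hn : ‖(x : ℂ) * Complex.I‖ = x := by
    simp [abs_of_pos hx0]
  have h := Complex.exp_bound (x := (x : ℂ) * Complex.I) (by rw [hn]; exact hx1) (n := 8) (by norm_num)
  rw [hn] at h
  have h2 := (Complex.abs_re_le_norm _).trans h
  have h3 : (Complex.exp (x * Complex.I) - ∑ m ∈ Finset.range 8, ((x : ℂ) * Complex.I) ^ m / (m.factorial : ℂ)).re
      = Real.cos x - (1 - (x^2/2 - x^4/24 + x^6/720)) := by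
    have e : (∑ m ∈ Finset.range 8, ((x : ℂ) * Complex.I) ^ m / (m.factorial : ℂ))
       = ((1 - (x^2/2 - x^4/24 + x^6/720) : ℝ) : ℂ) + ((x - x^3/6 + x^5/120 - x^7/5040 : ℝ) : ℂ) * Complex.I := by
      have i2 := Complex.I_sq
      have i3 : Complex.I ^ 3 = -Complex.I := by rw [pow_succ, i2]; ring
      have i4 : Complex.I ^ 4 = 1 := by rw [pow_succ, i3]; linear_combination -i2
      have i5 : Complex.I ^ 5 = Complex.I := by rw [pow_succ, i4]; ring
      have i6 : Complex.I ^ 6 = -1 := by rw [pow_succ, i5]; linear_combination i2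
      have i7 : Complex.I ^ 7 = -Complex.I := by rw [pow_succ, i6]; ring
      simp only [Finset.sum_range_succ, Finset.sum_range_zero, mul_pow, i2, i3, i4, i5, i6, i7, Nat.factorial]
      push_cast
      ring
    rw [e, Complex.sub_re, Complex.exp_ofReal_mul_I_re, Complex.add_re, Complex.re_ofReal_mul,
      Complex.ofReal_re, Complex.I_re]
    ring
  rw [h3] at h2
  have hx8 : 0 < x^8 := by positivity
  refine ⟨(Real.cos x - (1 - (x^2/2 - x^4/24 + x^6/720))) / x^8, ?_, ?_⟩
  · rw [abs_div, abs_of_pos hx8, div_le_one hx8]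
    refine h2.trans ?_
    norm_num [Nat.factorial]
    linarith
  · field_simp
    ring

theorem poly_bound_aux : ∃ C : ℝ, ∀ x t : ℝ, 0 < x → x ≤ 1 → |t| ≤ 1 →
    |32 * (x^2/2 - x^4/24 + x^6/720 - x^8*t) * (3 - (x^2/2 - x^4/24 + x^6/720 - x^8*t))
      - (x - x^5/2880)^2 * (48 - 24 * (x^2/2 - x^4/24 + x^6/720 - x^8*t)
        + 2 * (x^2/2 - x^4/24 + x^6/720 - x^8*t)^2)| ≤ C * x^8 := by
  let Q : ℝ × ℝ → ℝ := fun p => (fun x t : ℝ => (1/120)*x^0*t^0 + (-96)*x^0*t^1 + (-29/19200)*x^2*t^0 + (8)*x^2*t^1 + (187/2073600)*x^4*t^0 + (-2/3)*x^4*t^1 + (1/3317760)*x^6*t^0 + (-11/180)*x^6*t^1 + (-73/497664000)*x^8*t^0 + (1/240)*x^8*t^1 + (-32)*x^8*t^2 + (23/11943936000)*x^10*t^0 + (13/115200)*x^10*t^1 + (-2)*x^10*t^2 + (1/35831808000)*x^12*t^0 + (-1/276480)*x^12*t^1 + (-1/2149908480000)*x^14*t^0 + (-1/49766400)*x^14*t^1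 + (1/720)*x^14*t^2 + (1/1492992000)*x^16*t^1 + (-1/4147200)*x^18*t^2) p.1 p.2
  obtain ⟨C, hC⟩ := ((isCompact_Icc (a := (0:ℝ)) (b := 1)).prod
    (isCompact_Icc (a := (-1:ℝ)) (b := 1))).exists_bound_of_continuousOn (f := Q)
      (by dsimp only [Q]; fun_prop)
  refine ⟨C, fun x t h0 h1 ht => ?_⟩
  have h := hC (x, t) ⟨⟨h0.le, h1⟩, abs_le.1 ht⟩
  rw [Real.norm_eq_abs] at h
  have hx8 : 0 < x^8 := by positivity
  have := mul_le_mul_of_nonneg_right h hx8.le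
  rw [← abs_of_pos hx8, ← abs_mul, abs_of_pos hx8] at this
  refine le_of_eq_of_le ?_ this
  congr 1
  dsimp only [Q]
  ring



/-- Dispersion expansion for Lobatto-integrated `C¹` quadratic isogeometric
analysis: the discrete frequency function
`G_L(θ) = √(16(3 − 2cos θ − cos 2θ)/(27 + 20cos θ + cos 2θ))` satisfies
`G_L(θ) = θ − θ⁵/2880 + O(θ⁷)` as `θ → 0`, i.e. its absolute phase error is
`(1/5!)·θ⁵/24 + O(θ⁷)`, of opposite sign to the Gauss-integrated scheme. -/
theorem iga_quadratic_lobatto_dispersion_expansion :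
    (fun θ : ℝ =>
        Real.sqrt (16 * (3 - 2 * Real.cos θ - Real.cos (2 * θ))
            / (27 + 20 * Real.cos θ + Real.cos (2 * θ)))
          - θ + θ ^ 5 / 2880)
      =O[𝓝[>] (0 : ℝ)] fun θ : ℝ => θ ^ 7 := by
  obtain ⟨C, hC⟩ := poly_bound_aux
  refine IsBigO.of_bound (C * 2) ?_
  filter_upwards [Ioc_mem_nhdsGT (show (0:ℝ) < 1 by norm_num)] with x hx
  obtain ⟨h0, h1⟩ := hx
  obtain ⟨t, ht, hc⟩ := cos_taylor_aux x h0 h1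
  have hb := hC x t h0 h1 ht
  set s := x^2/2 - x^4/24 + x^6/720 - x^8*t with hs
  have hc1 := Real.cos_le_one x
  have hc2 := Real.neg_one_le_cos x
  rw [hc] at hc1 hc2
  have hs0 : 0 ≤ s := by linarith
  have hs2 : s ≤ 2 := by linarith
  have hD : 1 ≤ 48 - 24 * s + 2 * s^2 := by nlinarith
  have hD0 : 0 < 48 - 24 * s + 2 * s^2 := by linarith
  have hX : 16 * (3 - 2 * Real.cos x - Real.cos (2 * x)) / (27 + 20 * Real.cos x + Real.cos (2 * x))
      = 32 * s * (3 - s) / (48 - 24 * s + 2 * s^2) := by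
    rw [Real.cos_two_mul, hc]
    congr 1 <;> ring
  rw [hX]
  set X := 32 * s * (3 - s) / (48 - 24 * s + 2 * s^2) with hXd
  have hX0 : 0 ≤ X := by
    apply div_nonneg _ hD0.le
    apply mul_nonneg <;> linarith
  have hx5 : x^5 ≤ x := by
    simpa using pow_le_pow_of_le_one h0.le h1 (show 1 ≤ 5 by norm_num)
  have hC0 : |X - (x - x^5/2880)^2| ≤ C * x^8 := by
    have e : X - (x - x^5/2880)^2 = (32 * s * (3 - s) - (x - x^5/2880)^2 * (48 - 24 * s + 2 * s^2))
        / (48 - 24 * s + 2 * s^2) := by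
      rw [sub_div, mul_div_assoc _ _ (48 - 24 * s + 2 * s^2), mul_div_assoc ((x - x^5/2880)^2), div_self hD0.ne', mul_one, hXd, mul_div_assoc]
    rw [e, abs_div, abs_of_pos hD0]
    exact (div_le_self (abs_nonneg _) hD).trans hb
  have hq := Real.sqrt_nonneg X
  have hsq := Real.sq_sqrt hX0
  have hP : x / 2 ≤ √X + (x - x^5/2880) := by linarith
  have hprod : |√X - x + x^5/2880| * (√X + (x - x^5/2880)) ≤ C * x^8 := by
    rw [← abs_of_pos (show 0 < √X + (x - x^5/2880) by linarith), ← abs_mul]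
    refine le_of_eq_of_le ?_ hC0
    congr 1
    linear_combination hsq
  have h3 := (mul_le_mul_of_nonneg_left hP (abs_nonneg (√X - x + x^5/2880))).trans hprod
  rw [Real.norm_eq_abs, Real.norm_eq_abs, abs_of_pos (by positivity : 0 < x^7)]
  refine le_of_mul_le_mul_right ?_ h0
  linarith
end

section
/- Fix τ ∈ ℝ and define m_τ : ℝ → ℝ by m_τ(θ) = τ·(27 + 20cos θ + cos 2θ)/48 + (1 − τ)·(33 + 26cos θ + cos 2θ)/60, k(θ) = (3 − 2cos θ − cos 2θ)/3, and G_τ(θ) = √(k(θ)/m_τ(θ)). Then, as θ → 0, G_τ(θ) = θ + (2 − 3τ)·θ⁵/2880 + O(θ⁷); that is, the function θ ↦ G_τ(θ) − θ − (2 − 3τ)θ⁵/2880 is O(θ⁷) in a neighborhood of 0. -/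
open Real Filter Asymptotics Topology

/-- Sixth order Taylor bound for the cosine. -/
theorem cos_taylor_bound (x : ℝ) (hx : |x| ≤ 1) :
    |Real.cos x - (1 - x ^ 2 / 2 + x ^ 4 / 24 - x ^ 6 / 720)| ≤ x ^ 8 := by
  have hn : ‖(x : ℂ) * Complex.I‖ = |x| := by simp
  have h := Complex.exp_bound (x := (x : ℂ) * Complex.I) (by rw [hn]; exact hx)
    (n := 8) (by norm_num)
  have h2 := (Complex.abs_re_le_norm _).trans h
  rw [hn] at h2
  have hre : (Complex.exp ((x : ℂ) * Complex.I)
      - ∑ m ∈ Finset.range 8, ((x : ℂ) * Complex.I) ^ m / (m.factorial : ℂ)).re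
      = Real.cos x - (1 - x ^ 2 / 2 + x ^ 4 / 24 - x ^ 6 / 720) := by
    have hs : ∑ m ∈ Finset.range 8, ((x : ℂ) * Complex.I) ^ m / (m.factorial : ℂ)
        = ((1 - x ^ 2 / 2 + x ^ 4 / 24 - x ^ 6 / 720 : ℝ) : ℂ)
          + ((x - x ^ 3 / 6 + x ^ 5 / 120 - x ^ 7 / 5040 : ℝ) : ℂ) * Complex.I := by
      have i2 : Complex.I ^ 2 = -1 := Complex.I_sq
      have i3 : Complex.I ^ 3 = -Complex.I := by rw [pow_succ, i2]; ring
      have i4 : Complex.I ^ 4 = 1 := Complex.I_pow_four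
      have i5 : Complex.I ^ 5 = Complex.I := by rw [pow_succ, i4]; ring
      have i6 : Complex.I ^ 6 = -1 := by rw [pow_succ, i5, ← sq, i2]
      have i7 : Complex.I ^ 7 = -Complex.I := by rw [pow_succ, i6]; ring
      simp only [Finset.sum_range_succ, Finset.sum_range_zero, Nat.factorial, mul_pow,
        i2, i3, i4, i5, i6, i7]
      push_cast
      ring
    rw [hs, Complex.exp_mul_I, ← Complex.ofReal_cos, ← Complex.ofReal_sin]
    simp only [Complex.sub_re, Complex.add_re, Complex.mul_re, Complex.ofReal_re,
      Complex.ofReal_im, Complex.I_re, Complex.I_im]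
    ring
  rw [hre] at h2
  refine h2.trans ?_
  have h8 : |x| ^ 8 = x ^ 8 := Even.pow_abs (by decide) x
  rw [h8]
  have : (0 : ℝ) ≤ x ^ 8 := by positivity
  refine mul_le_of_le_one_right this ?_
  norm_num [Nat.factorial]

theorem cos_isBigO (a : ℝ) :
    (fun θ : ℝ => Real.cos (a * θ)
      - (1 - (a * θ) ^ 2 / 2 + (a * θ) ^ 4 / 24 - (a * θ) ^ 6 / 720))
      =O[𝓝 (0 : ℝ)] fun θ : ℝ => θ ^ 8 := by
  refine IsBigO.of_bound (a ^ 8) ?_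
  have hc : ContinuousAt (fun θ : ℝ => |a * θ|) 0 := by fun_prop
  have : ∀ᶠ θ in 𝓝 (0 : ℝ), |a * θ| < 1 := hc.eventually_lt_const (by simp)
  filter_upwards [this] with θ hθ
  have h := cos_taylor_bound (a * θ) hθ.le
  rw [Real.norm_eq_abs, Real.norm_eq_abs, abs_of_nonneg (by positivity : (0 : ℝ) ≤ θ ^ 8)]
  rwa [mul_pow a θ 8] at h

theorem bigO_mul_cont {f g h : ℝ → ℝ} (hf : f =O[𝓝 (0 : ℝ)] h) (hg : Continuous g) :
    (fun θ => f θ * g θ) =O[𝓝 (0 : ℝ)] h := by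
  have h1 : g =O[𝓝 (0 : ℝ)] fun _ => (1 : ℝ) := (hg.tendsto 0).isBigO_one ℝ
  simpa using hf.mul h1

theorem residual_isBigO (τ : ℝ) :
    (fun θ : ℝ => (3 - 2 * Real.cos θ - Real.cos (2 * θ)) / 3
      - (τ * (27 + 20 * Real.cos θ + Real.cos (2 * θ)) / 48
          + (1 - τ) * (33 + 26 * Real.cos θ + Real.cos (2 * θ)) / 60)
        * (θ + (2 - 3 * τ) * θ ^ 5 / 2880) ^ 2)
      =O[𝓝 (0 : ℝ)] fun θ : ℝ => θ ^ 8 := by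
  have h0 := bigO_mul_cont (isBigO_refl (fun θ : ℝ => θ ^ 8) (𝓝 0))
    (g := fun θ => -((-1 / 480 - τ / 2880)
      + 2 * ((2 - 3 * τ) / 2880) * (-1 / 4 + (7 / 240 + τ / 480) * θ ^ 2
        + (-1 / 480 - τ / 2880) * θ ^ 4)
      + ((2 - 3 * τ) / 2880) ^ 2 * θ ^ 2 * (1 - θ ^ 2 / 4 + (7 / 240 + τ / 480) * θ ^ 4
        + (-1 / 480 - τ / 2880) * θ ^ 6))) (by fun_prop)
  have h1 := bigO_mul_cont (cos_isBigO 1)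
    (g := fun θ => -(2 / 3) - (τ * 20 / 48 + (1 - τ) * 26 / 60)
      * (θ + (2 - 3 * τ) * θ ^ 5 / 2880) ^ 2) (by fun_prop)
  have h2 := bigO_mul_cont (cos_isBigO 2)
    (g := fun θ => -(1 / 3) - (τ / 48 + (1 - τ) / 60)
      * (θ + (2 - 3 * τ) * θ ^ 5 / 2880) ^ 2) (by fun_prop)
  refine ((h0.add h1).add h2).congr_left ?_
  intro θ
  simp only [one_mul]
  ring

/-- Dispersion expansion for the blended `C¹` quadratic isogeometric scheme
with blending parameter `τ` (mass matrix `M_τ = τ·M_GLL + (1 − τ)·M_G`):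
with mass symbol `m_τ(θ) = τ(27 + 20cos θ + cos 2θ)/48 + (1 − τ)(33 + 26cos θ + cos 2θ)/60`
and stiffness symbol `k(θ) = (3 − 2cos θ − cos 2θ)/3`, the discrete frequency
function `G_τ(θ) = √(k(θ)/m_τ(θ))` satisfies
`G_τ(θ) = θ + (2 − 3τ)θ⁵/2880 + O(θ⁷)` as `θ → 0`. -/
theorem iga_quadratic_blended_dispersion_expansion (τ : ℝ) :
    (fun θ : ℝ =>
        Real.sqrt (((3 - 2 * Real.cos θ - Real.cos (2 * θ)) / 3)
            / (τ * (27 + 20 * Real.cos θ + Real.cos (2 * θ)) / 48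
                + (1 - τ) * (33 + 26 * Real.cos θ + Real.cos (2 * θ)) / 60))
          - θ - (2 - 3 * τ) * θ ^ 5 / 2880)
      =O[𝓝[>] (0 : ℝ)] fun θ : ℝ => θ ^ 7 := by
  obtain ⟨C, hC⟩ := (residual_isBigO τ).bound
  have hm : ∀ᶠ θ in 𝓝 (0 : ℝ), (1 / 2 : ℝ)
      < τ * (27 + 20 * Real.cos θ + Real.cos (2 * θ)) / 48
          + (1 - τ) * (33 + 26 * Real.cos θ + Real.cos (2 * θ)) / 60 := by
    have hc : ContinuousAt (fun θ : ℝ => τ * (27 + 20 * Real.cos θ + Real.cos (2 * θ)) / 48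
          + (1 - τ) * (33 + 26 * Real.cos θ + Real.cos (2 * θ)) / 60) 0 := by fun_prop
    refine hc.eventually_const_lt ?_
    simp only [mul_zero, Real.cos_zero]
    linarith
  have hP : ∀ᶠ θ in 𝓝 (0 : ℝ), (1 / 2 : ℝ) < 1 + (2 - 3 * τ) * θ ^ 4 / 2880 := by
    have hc : ContinuousAt (fun θ : ℝ => 1 + (2 - 3 * τ) * θ ^ 4 / 2880) 0 := by fun_prop
    refine hc.eventually_const_lt ?_
    norm_num
  refine IsBigO.of_bound (4 * C) ?_
  filter_upwards [nhdsWithin_le_nhds hC, nhdsWithin_le_nhds hm, nhdsWithin_le_nhds hP,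
    self_mem_nhdsWithin] with θ h1 h2 h3 h4
  have h4 : 0 < θ := h4
  have hk : 0 ≤ (3 - 2 * Real.cos θ - Real.cos (2 * θ)) / 3 := by
    linarith [Real.cos_le_one θ, Real.cos_le_one (2 * θ)]
  generalize (3 - 2 * Real.cos θ - Real.cos (2 * θ)) / 3 = k at *
  generalize τ * (27 + 20 * Real.cos θ + Real.cos (2 * θ)) / 48
          + (1 - τ) * (33 + 26 * Real.cos θ + Real.cos (2 * θ)) / 60 = m at *
  have hPe : θ / 2 ≤ θ + (2 - 3 * τ) * θ ^ 5 / 2880 := by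
    have := mul_lt_mul_of_pos_left h3 h4
    nlinarith [this]
  rw [sub_sub]
  generalize θ + (2 - 3 * τ) * θ ^ 5 / 2880 = P at *
  have hm0 : 0 < m := by linarith
  have hs0 := Real.sqrt_nonneg (k / m)
  have hs2 : Real.sqrt (k / m) ^ 2 * m = k := by
    rw [Real.sq_sqrt (div_nonneg hk hm0.le)]
    field_simp
  generalize Real.sqrt (k / m) = s at *
  rw [Real.norm_eq_abs, Real.norm_eq_abs, abs_of_pos (by positivity : 0 < θ ^ 8)] at h1
  rw [Real.norm_eq_abs, Real.norm_eq_abs, abs_of_pos (by positivity : 0 < θ ^ 7)]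
  have e : k - m * P ^ 2 = (s - P) * (m * (s + P)) := by rw [← hs2]; ring
  have hpos : θ / 4 ≤ m * (s + P) := by nlinarith
  rw [e, abs_mul, abs_of_nonneg (by linarith : 0 ≤ m * (s + P))] at h1
  have h5 : |s - P| * (θ / 4) ≤ C * θ ^ 8 :=
    (mul_le_mul_of_nonneg_left hpos (abs_nonneg _)).trans h1
  refine le_of_mul_le_mul_right ?_ (by positivity : 0 < θ / 4)
  calc |s - P| * (θ / 4) ≤ C * θ ^ 8 := h5
    _ = 4 * C * θ ^ 7 * (θ / 4) := by ring
end
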